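/- Suppose B_-(x,z) = v₁(x)b_-(z), B_+(x,z) = v₁(x)b_+(z), C_-(x,y) = v₂(x)c_-(y), C_+(x,y) = v₂(x)c_+(y), all nonzero, and that the Laurent polynomial P satisfies P = B_0(x,z) + v₁(x)(b_-(z)y^{-1} + b_+(z)y) = C_0(x,y) + v₂(x)(c_-(y)z^{-1} + c_+(y)z), where B_0 does not involve y and C_0 does not involve z. If b_- /b_+ is not constant (so P contains a monomial involving both y and z), then v₁ and v₂ agree up to a nonzero scalar, and P can be written as u(x) + v(x)t(y,z) for Laurent polynomials u, v in x and t in y, z; i.e., P is (1,2)-Hadamard. -/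

import Mathlib

open MvPolynomial

noncomputable section

/-- The field `ℚ(x,y,z)` of rational functions in three variables. -/
abbrev Fld : Type := FractionRing (MvPolynomial (Fin 3) ℚ)

/-- The variables `x = Xv 0`, `y = Xv 1`, `z = Xv 2` of `ℚ(x,y,z)`. -/
def Xv (i : Fin 3) : Fld := algebraMap (MvPolynomial (Fin 3) ℚ) Fld (X i)

/-- The value at `(a,b)` of the bivariate Laurent polynomial `p/(s^m t^n)`. -/
def lv (p : MvPolynomial (Fin 2) ℚ) (m n : ℕ) (a b : Fld) : Fld :=
  aeval ![a, b] p / (a ^ m * b ^ n)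

/-- The value at `a` of the univariate Laurent polynomial `p/s^m`. -/
def lv1 (p : Polynomial ℚ) (m : ℕ) (a : Fld) : Fld :=
  Polynomial.aeval a p / a ^ m

/-- The value at `(a,b)` of the ratio of two bivariate Laurent polynomials. -/
def lratio (p : MvPolynomial (Fin 2) ℚ) (mp np : ℕ) (q : MvPolynomial (Fin 2) ℚ)
    (mq nq : ℕ) (a b : Fld) : Fld :=
  lv p mp np a b / lv q mq nq a b

/-- `f` is a Laurent polynomial whose values at points with nonzero coordinates are `g`. -/
def LRep (f : Fld) (g : (Fin 3 → ℚ) → ℚ) : Prop :=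
  ∃ (p : MvPolynomial (Fin 3) ℚ) (k : ℕ),
    f * (Xv 0 * Xv 1 * Xv 2) ^ k = algebraMap (MvPolynomial (Fin 3) ℚ) Fld p ∧
    ∀ w : Fin 3 → ℚ, (∀ i, w i ≠ 0) → g w * (w 0 * w 1 * w 2) ^ k = eval w p

theorem Xv_ne (i : Fin 3) : Xv i ≠ 0 := by
  unfold Xv
  rw [Ne, IsFractionRing.to_map_eq_zero_iff]
  exact X_ne_zero i

theorem LRep.add {f f' : Fld} {g g' : (Fin 3 → ℚ) → ℚ} (h : LRep f g) (h' : LRep f' g') :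
    LRep (f + f') (fun w => g w + g' w) := by
  obtain ⟨p, k, h1, h2⟩ := h
  obtain ⟨p', k', h1', h2'⟩ := h'
  refine ⟨p * (X 0 * X 1 * X 2) ^ k' + p' * (X 0 * X 1 * X 2) ^ k, k + k', ?_, ?_⟩
  · simp only [map_add, map_mul, map_pow, ← h1, ← h1']
    change _ = _ * (Xv 0 * Xv 1 * Xv 2) ^ k' + _ * (Xv 0 * Xv 1 * Xv 2) ^ k
    ring
  · intro w hw
    simp only [map_add, map_mul, map_pow, ← h2 w hw, ← h2' w hw, eval_X]
    ring

theorem LRep.mul {f f' : Fld} {g g' : (Fin 3 → ℚ) → ℚ} (h : LRep f g) (h' : LRep f' g') :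
    LRep (f * f') (fun w => g w * g' w) := by
  obtain ⟨p, k, h1, h2⟩ := h
  obtain ⟨p', k', h1', h2'⟩ := h'
  refine ⟨p * p', k + k', ?_, ?_⟩
  · simp only [map_mul, ← h1, ← h1']
    ring
  · intro w hw
    simp only [map_mul, ← h2 w hw, ← h2' w hw]
    ring

theorem LRep.const (q : ℚ) : LRep (algebraMap ℚ Fld q) (fun _ => q) := by
  refine ⟨C q, 0, ?_, ?_⟩
  · rw [pow_zero, mul_one, IsScalarTower.algebraMap_apply ℚ (MvPolynomial (Fin 3) ℚ) Fld]
    rfl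
  · intro w hw
    simp

theorem LRep.var (i : Fin 3) : LRep (Xv i) (fun w => w i) := by
  refine ⟨X i, 0, ?_, ?_⟩
  · rw [pow_zero, mul_one]; rfl
  · intro w hw
    simp

theorem LRep.inv (i : Fin 3) : LRep (Xv i)⁻¹ (fun w => (w i)⁻¹) := by
  have h0 := Xv_ne 0
  have h1 := Xv_ne 1
  have h2 := Xv_ne 2
  fin_cases i
  · refine ⟨X 1 * X 2, 1, ?_, ?_⟩
    · rw [map_mul]; change _ = Xv 1 * Xv 2
      simp; field_simp
    · intro w hw
      have := hw 0
      simp; field_simp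
  · refine ⟨X 0 * X 2, 1, ?_, ?_⟩
    · rw [map_mul]; change _ = Xv 0 * Xv 2
      simp; field_simp
    · intro w hw
      have := hw 1
      simp; field_simp
  · refine ⟨X 0 * X 1, 1, ?_, ?_⟩
    · rw [map_mul]; change _ = Xv 0 * Xv 1
      simp; field_simp
    · intro w hw
      have := hw 2
      simp; field_simp

theorem LRep.pow {f : Fld} {g : (Fin 3 → ℚ) → ℚ} (h : LRep f g) (n : ℕ) :
    LRep (f ^ n) (fun w => g w ^ n) := by
  induction n with
  | zero => simpa using LRep.const 1
  | succ n ih => simpa only [pow_succ] using ih.mul h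

theorem LRep.eq_iff {f f' : Fld} {g g' : (Fin 3 → ℚ) → ℚ} (h : LRep f g) (h' : LRep f' g') :
    f = f' ↔ ∀ w : Fin 3 → ℚ, (∀ i, w i ≠ 0) → g w = g' w := by
  have key : ∀ {f : Fld} {g : (Fin 3 → ℚ) → ℚ}, LRep f g →
      (f = 0 ↔ ∀ w : Fin 3 → ℚ, (∀ i, w i ≠ 0) → g w = 0) := by
    rintro f g ⟨p, k, h1, h2⟩
    have hX : (Xv 0 * Xv 1 * Xv 2) ^ k ≠ 0 :=
      pow_ne_zero _ (mul_ne_zero (mul_ne_zero (Xv_ne 0) (Xv_ne 1)) (Xv_ne 2))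
    have hp : f = 0 ↔ p = 0 := by
      rw [← IsFractionRing.to_map_eq_zero_iff (R := MvPolynomial (Fin 3) ℚ) (K := Fld) (x := p),
        ← h1]
      simp [hX]
    rw [hp]
    constructor
    · rintro rfl w hw
      have := h2 w hw
      simpa [hw 0, hw 1, hw 2] using this
    · intro hg
      have h3 : p * (X 0 * X 1 * X 2) = 0 := by
        apply MvPolynomial.funext
        intro w
        by_cases hw : ∀ i, w i ≠ 0
        · rw [map_mul, ← h2 w hw, hg w hw]; simp
        · push Not at hw
          obtain ⟨i, hi⟩ := hw
          fin_cases i <;> simp_all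
      have h4 : (X 0 * X 1 * X 2 : MvPolynomial (Fin 3) ℚ) ≠ 0 :=
        mul_ne_zero (mul_ne_zero (X_ne_zero 0) (X_ne_zero 1)) (X_ne_zero 2)
      exact (mul_eq_zero.mp h3).resolve_right h4
  have h5 := key (h.add ((LRep.const (-1)).mul h'))
  have e : f + algebraMap ℚ Fld (-1) * f' = f - f' := by simp; ring
  rw [e, sub_eq_zero] at h5
  rw [h5]
  refine forall₂_congr fun w hw => ?_
  constructor <;> intro h <;> linarith

/-- Value of a univariate Laurent polynomial at a rational number. -/
def l1 (p : Polynomial ℚ) (m : ℕ) (a : ℚ) : ℚ := p.eval a * (a⁻¹) ^ m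

/-- Value of a bivariate Laurent polynomial at rational numbers. -/
def l2 (p : MvPolynomial (Fin 2) ℚ) (m n : ℕ) (a b : ℚ) : ℚ :=
  eval ![a, b] p * ((a⁻¹) ^ m * (b⁻¹) ^ n)

theorem LRep.lv1 (p : Polynomial ℚ) (m : ℕ) (i : Fin 3) :
    LRep (lv1 p m (Xv i)) (fun w => l1 p m (w i)) := by
  unfold _root_.lv1 l1
  rw [div_eq_mul_inv, ← inv_pow]
  refine LRep.mul ?_ ((LRep.inv i).pow m)
  induction p using Polynomial.induction_on' with
  | add p q hp hq => simpa using hp.add hq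
  | monomial n a =>
    simpa [Polynomial.aeval_monomial] using (LRep.const a).mul ((LRep.var i).pow n)

theorem LRep.lv (p : MvPolynomial (Fin 2) ℚ) (m n : ℕ) (i j : Fin 3) :
    LRep (lv p m n (Xv i) (Xv j)) (fun w => l2 p m n (w i) (w j)) := by
  unfold _root_.lv l2
  rw [div_eq_mul_inv, mul_inv, ← inv_pow, ← inv_pow]
  refine LRep.mul ?_ (((LRep.inv i).pow m).mul ((LRep.inv j).pow n))
  induction p using MvPolynomial.induction_on with
  | C a => simpa using LRep.const a
  | add p q hp hq => simpa using hp.add hq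
  | mul_X p k hp =>
    fin_cases k
    · simpa using hp.mul (LRep.var i)
    · simpa using hp.mul (LRep.var j)

theorem LRep.lv1_ne {p : Polynomial ℚ} {m : ℕ} {i : Fin 3} (h : _root_.lv1 p m (Xv i) ≠ 0) :
    ∃ a : ℚ, a ≠ 0 ∧ l1 p m a ≠ 0 := by
  by_contra! hc
  apply h
  rw [← map_zero (algebraMap ℚ Fld), (LRep.lv1 p m i).eq_iff (LRep.const 0)]
  intro w hw
  exact hc _ (hw i)

/-- Extraction of the two outer coefficients. -/
theorem outer {V1 V2 bm bp cm cp : ℚ → ℚ} {B C : ℚ → ℚ → ℚ}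
    (H : ∀ x y z : ℚ, x ≠ 0 → y ≠ 0 → z ≠ 0 →
      B x z + V1 x * (bm z * y⁻¹ + bp z * y) = C x y + V2 x * (cm y * z⁻¹ + cp y * z)) :
    (∃ (D : ℚ → ℚ) (α β : ℚ), ∀ x z : ℚ, x ≠ 0 → z ≠ 0 →
      V1 x * bm z = D x + V2 x * (α * z⁻¹ + β * z)) ∧
    (∃ (D : ℚ → ℚ) (α β : ℚ), ∀ x z : ℚ, x ≠ 0 → z ≠ 0 →
      V1 x * bp z = D x + V2 x * (α * z⁻¹ + β * z)) := by
  let Lp : (ℚ → ℚ) → ℚ := fun f => 2 / 3 * (f 2 - f 1 + (f 1 - f (-1)) / 4)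
  let Lm : (ℚ → ℚ) → ℚ := fun f => (f 1 - f (-1)) / 2 - Lp f
  constructor
  · refine ⟨fun x => Lm (C x), Lm cm, Lm cp, fun x z hx hz => ?_⟩
    have h1 := H x 1 z hx (by norm_num) hz
    have h2 := H x (-1) z hx (by norm_num) hz
    have h3 := H x 2 z hx (by norm_num) hz
    norm_num at h1 h2 h3
    simp only [Lm, Lp]
    linear_combination (1/2 - 2/3*(-3/4)) * h1 + (-1/2 + 2/3/4) * h2 - 2/3 * h3
  · refine ⟨fun x => Lp (C x), Lp cm, Lp cp, fun x z hx hz => ?_⟩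
    have h1 := H x 1 z hx (by norm_num) hz
    have h2 := H x (-1) z hx (by norm_num) hz
    have h3 := H x 2 z hx (by norm_num) hz
    norm_num at h1 h2 h3
    simp only [Lp]
    linear_combination (2/3*(-3/4)) * h1 + (-2/3/4) * h2 + 2/3 * h3

theorem prop_of {V1 V2 b D : ℚ → ℚ} {α β : ℚ}
    (h : ∀ x z : ℚ, x ≠ 0 → z ≠ 0 → V1 x * b z = D x + V2 x * (α * z⁻¹ + β * z))
    (hne : α ≠ 0 ∨ β ≠ 0) : ∃ lam : ℚ, ∀ x, x ≠ 0 → V2 x = lam * V1 x := by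
  let Lp : (ℚ → ℚ) → ℚ := fun f => 2 / 3 * (f 2 - f 1 + (f 1 - f (-1)) / 4)
  let Lm : (ℚ → ℚ) → ℚ := fun f => (f 1 - f (-1)) / 2 - Lp f
  rcases hne with hne | hne
  · refine ⟨Lm b / α, fun x hx => ?_⟩
    have h1 := h x 1 hx (by norm_num)
    have h2 := h x (-1) hx (by norm_num)
    have h3 := h x 2 hx (by norm_num)
    norm_num at h1 h2 h3
    rw [div_mul_eq_mul_div, eq_div_iff hne]
    simp only [Lm, Lp]
    linear_combination -(1/2 - 2/3*(-3/4)) * h1 - (-1/2 + 2/3/4) * h2 + 2/3 * h3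
  · refine ⟨Lp b / β, fun x hx => ?_⟩
    have h1 := h x 1 hx (by norm_num)
    have h2 := h x (-1) hx (by norm_num)
    have h3 := h x 2 hx (by norm_num)
    norm_num at h1 h2 h3
    rw [div_mul_eq_mul_div, eq_div_iff hne]
    simp only [Lp]
    linear_combination -(2/3*(-3/4)) * h1 - (-2/3/4) * h2 - 2/3 * h3

/-- Suppose `B₋ = v₁(x)b₋(z)`, `B₊ = v₁(x)b₊(z)`, `C₋ = v₂(x)c₋(y)`, `C₊ = v₂(x)c₊(y)`,
all nonzero, and the Laurent polynomial `P` satisfies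
`P = B₀(x,z) + v₁(x)(b₋(z)y⁻¹ + b₊(z)y) = C₀(x,y) + v₂(x)(c₋(y)z⁻¹ + c₊(y)z)`.
If `b₋/b₊` is not constant, then `v₁` and `v₂` agree up to a nonzero rational scalar and
`P = u(x) + v(x)·t(y,z)` for Laurent polynomials `u, v, t`, i.e. `P` is (1,2)-Hadamard. -/
theorem stmt13
    (v1 v2 bm bp cm cp : Polynomial ℚ) (m1 m2 mbm mbp mcm mcp : ℕ)
    (B0 C0 : MvPolynomial (Fin 2) ℚ) (b0x b0z c0x c0y : ℕ)
    (P : Fld)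
    (hv1 : lv1 v1 m1 (Xv 0) ≠ 0) (hv2 : lv1 v2 m2 (Xv 0) ≠ 0)
    (hbm : lv1 bm mbm (Xv 2) ≠ 0) (hbp : lv1 bp mbp (Xv 2) ≠ 0)
    (hcm : lv1 cm mcm (Xv 1) ≠ 0) (hcp : lv1 cp mcp (Xv 1) ≠ 0)
    (hP1 : P = lv B0 b0x b0z (Xv 0) (Xv 2) +
      lv1 v1 m1 (Xv 0) * (lv1 bm mbm (Xv 2) * (Xv 1)⁻¹ + lv1 bp mbp (Xv 2) * Xv 1))
    (hP2 : P = lv C0 c0x c0y (Xv 0) (Xv 1) +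
      lv1 v2 m2 (Xv 0) * (lv1 cm mcm (Xv 1) * (Xv 2)⁻¹ + lv1 cp mcp (Xv 1) * Xv 2))
    (hnc : ¬∃ q : ℚ, lv1 bm mbm (Xv 2) / lv1 bp mbp (Xv 2) = algebraMap ℚ Fld q) :
    (∃ lam : ℚ, lam ≠ 0 ∧ lv1 v2 m2 (Xv 0) = algebraMap ℚ Fld lam * lv1 v1 m1 (Xv 0)) ∧
    ∃ (u v : Polynomial ℚ) (mu mv : ℕ) (t : MvPolynomial (Fin 2) ℚ) (mt nt : ℕ),
      P = lv1 u mu (Xv 0) + lv1 v mv (Xv 0) * lv t mt nt (Xv 1) (Xv 2) := by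
  have R1 := (LRep.lv B0 b0x b0z 0 2).add ((LRep.lv1 v1 m1 0).mul
    (((LRep.lv1 bm mbm 2).mul (LRep.inv 1)).add ((LRep.lv1 bp mbp 2).mul (LRep.var 1))))
  have R2 := (LRep.lv C0 c0x c0y 0 1).add ((LRep.lv1 v2 m2 0).mul
    (((LRep.lv1 cm mcm 1).mul (LRep.inv 2)).add ((LRep.lv1 cp mcp 1).mul (LRep.var 2))))
  have H0 := (R1.eq_iff R2).1 (hP1.symm.trans hP2)
  have H : ∀ x y z : ℚ, x ≠ 0 → y ≠ 0 → z ≠ 0 →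
      l2 B0 b0x b0z x z + l1 v1 m1 x * (l1 bm mbm z * y⁻¹ + l1 bp mbp z * y) =
      l2 C0 c0x c0y x y + l1 v2 m2 x * (l1 cm mcm y * z⁻¹ + l1 cp mcp y * z) := by
    intro x y z hx hy hz
    have := H0 ![x, y, z] (by intro i; fin_cases i <;> simpa)
    simpa using this
  obtain ⟨x0, hx0, hvx0⟩ := LRep.lv1_ne hv1
  obtain ⟨x2, hx2, hvx2⟩ := LRep.lv1_ne hv2
  obtain ⟨z0, hz0, hbz0⟩ := LRep.lv1_ne hbp
  obtain ⟨⟨D, α, β, hD⟩, ⟨D', α', β', hD'⟩⟩ := outer H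
  have hlam : ∃ lam : ℚ, ∀ x, x ≠ 0 → l1 v2 m2 x = lam * l1 v1 m1 x := by
    by_cases h1 : α ≠ 0 ∨ β ≠ 0
    · exact prop_of hD h1
    by_cases h2 : α' ≠ 0 ∨ β' ≠ 0
    · exact prop_of hD' h2
    exfalso
    push Not at h1 h2
    obtain ⟨rfl, rfl⟩ := h1
    obtain ⟨rfl, rfl⟩ := h2
    apply hnc
    refine ⟨l1 bm mbm z0 / l1 bp mbp z0, ?_⟩
    rw [div_eq_iff hbp, (LRep.lv1 bm mbm 2).eq_iff ((LRep.const _).mul (LRep.lv1 bp mbp 2))]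
    intro w hw
    have e1 : l1 bm mbm (w 2) = l1 bm mbm z0 := by
      apply mul_left_cancel₀ hvx0
      rw [hD x0 _ hx0 (hw 2), hD x0 _ hx0 hz0]; ring
    have e2 : l1 bp mbp (w 2) = l1 bp mbp z0 := by
      apply mul_left_cancel₀ hvx0
      rw [hD' x0 _ hx0 (hw 2), hD' x0 _ hx0 hz0]; ring
    simp only [e1, e2]
    field_simp
  obtain ⟨lam, hlam⟩ := hlam
  refine ⟨⟨lam, ?_, ?_⟩, ?_⟩
  · rintro rfl
    apply hvx2
    rw [hlam x2 hx2, zero_mul]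
  · rw [(LRep.lv1 v2 m2 0).eq_iff ((LRep.const _).mul (LRep.lv1 v1 m1 0))]
    intro w hw
    exact hlam _ (hw 0)
  · refine ⟨aeval ![Polynomial.X, 1] C0, v1, c0x, m1,
      C lam * (C (l1 cm mcm 1) + C (l1 cp mcp 1) * X 1 ^ 2) * X 0 * X 1 ^ (mbm + mbp)
      + Polynomial.aeval (X 1) bm * X 1 ^ (mbp + 1) * (1 - X 0)
      + Polynomial.aeval (X 1) bp * X 1 ^ (mbm + 1) * (X 0 ^ 2 - X 0),
      1, mbm + mbp + 1, ?_⟩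
    rw [hP1, R1.eq_iff ((LRep.lv1 _ _ 0).add ((LRep.lv1 _ _ 0).mul (LRep.lv _ _ _ 1 2)))]
    intro w hw
    have hy := hw 1
    have hz := hw 2
    have h1 := H (w 0) 1 (w 2) (hw 0) one_ne_zero hz
    rw [hlam _ (hw 0)] at h1
    have eu : l1 (aeval ![Polynomial.X, 1] C0) c0x (w 0) = l2 C0 c0x c0y (w 0) 1 := by
      unfold l1 l2
      have : ∀ p : MvPolynomial (Fin 2) ℚ,
          Polynomial.eval (w 0) (aeval ![Polynomial.X, 1] p) = eval ![w 0, 1] p := by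
        intro p
        induction p using MvPolynomial.induction_on with
        | C a => simp
        | add p q hp hq => simp [hp, hq]
        | mul_X p k hp => fin_cases k <;> simp [hp]
      rw [this]; simp
    have ea : ∀ p : Polynomial ℚ,
        eval ![w 1, w 2] (Polynomial.aeval (X 1 : MvPolynomial (Fin 2) ℚ) p) = p.eval (w 2) := by
      intro p
      induction p using Polynomial.induction_on' with
      | add p q hp hq => simp [hp, hq]
      | monomial n a => simp [Polynomial.aeval_monomial, MvPolynomial.algebraMap_eq]
    have et : ∀ t, t = (C lam * (C (l1 cm mcm 1) + C (l1 cp mcp 1) * X 1 ^ 2) * X 0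
          * X 1 ^ (mbm + mbp)
        + Polynomial.aeval (X 1) bm * X 1 ^ (mbp + 1) * (1 - X 0)
        + Polynomial.aeval (X 1) bp * X 1 ^ (mbm + 1) * (X 0 ^ 2 - X 0) :
          MvPolynomial (Fin 2) ℚ) →
        l2 t 1 (mbm + mbp + 1) (w 1) (w 2) =
        lam * (l1 cm mcm 1 * (w 2)⁻¹ + l1 cp mcp 1 * w 2)
        + l1 bm mbm (w 2) * ((w 1)⁻¹ - 1) + l1 bp mbp (w 2) * (w 1 - 1) := by
      intro t ht
      unfold l2
      rw [ht]
      simp only [map_add, map_mul, map_sub, map_pow, map_one, eval_C, eval_X, ea]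
      simp only [Matrix.cons_val_zero, Matrix.cons_val_one]
      generalize l1 cm mcm 1 = c1
      generalize l1 cp mcp 1 = c2
      unfold l1
      simp only [inv_pow, pow_add, pow_one, mul_inv]
      have hA : w 2 ^ mbm ≠ 0 := pow_ne_zero _ hz
      have hB : w 2 ^ mbp ≠ 0 := pow_ne_zero _ hz
      generalize w 2 ^ mbm = A at *
      generalize w 2 ^ mbp = B at *
      field_simp
    rw [et _ rfl, eu]
    linear_combination h1
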